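/- arXiv:1704.08072 — 2 statements merged into one kernel-verified Lean document; each statement's English description precedes it below -/
import Mathlib

section
/- The sequence x_0 = 0, x_{k+1} = G(x_k) converges (componentwise) to a limit m, and m is the minimal nonnegative solution of x = G(x): m ≥ 0, G(m) = m, and m ≤ x for every nonnegative solution x of x = G(x). -/
noncomputable def Gmap (n : ℕ) (α : ℝ) (v : Fin n → ℝ)
    (R : Matrix (Fin n) (Fin n × Fin n) ℝ) (x : Fin n → ℝ) : Fin n → ℝ :=
  α • R.mulVec (fun p => x p.1 * x p.2) + (1 - α) • v

/-!
A map `x ↦ A (x ⊗ x) + b` with nonnegative coefficients is monotone on the nonnegative orthant, so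
its iterates from `0` increase. If `a` bounds the column sums of `A`, summing coordinates gives
`∑ i, (A (x ⊗ x) + b) i ≤ a * (∑ i, x i) ^ 2 + ∑ i, b i`; hence the region `0 ≤ x`, `∑ i, x i ≤ s`
is invariant whenever `a * s ^ 2 + ∑ i, b i ≤ s`, and the iterates stay bounded. For `G` this holds
with `a = α` and `s = 1`. The supremum of the iterates is a fixed point by continuity, and by
monotonicity no iterate can overtake a nonnegative fixed point.
-/

open Filter Function Set Topology

section MonotoneIteration

variable {E : Type*} {f : E → E} {a : E}

section Preorder

variable [Preorder E]

theorem le_iterate_of_monotoneOn_Ici (hf : MonotoneOn f (Ici a)) (ha : a ≤ f a) (k : ℕ) :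
    a ≤ f^[k] a := by
  have hmaps : MapsTo f (Ici a) (Ici a) := fun _ hz => ha.trans (hf self_mem_Ici hz hz)
  exact hmaps.iterate k self_mem_Ici

theorem monotone_iterate_of_monotoneOn_Ici (hf : MonotoneOn f (Ici a)) (ha : a ≤ f a) :
    Monotone fun k => f^[k] a := by
  refine monotone_nat_of_le_succ fun k => ?_
  induction k with
  | zero => exact ha
  | succ k ih =>
    simp only [iterate_succ_apply'] at ih ⊢
    have hk := le_iterate_of_monotoneOn_Ici hf ha k
    exact hf hk (hk.trans ih) ih

theorem iterate_le_of_map_le (hf : MonotoneOn f (Ici a)) (ha : a ≤ f a) {z : E} (hz : a ≤ z)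
    (hfz : f z ≤ z) (k : ℕ) : f^[k] a ≤ z := by
  induction k with
  | zero => exact hz
  | succ k ih =>
    rw [iterate_succ_apply']
    exact (hf (le_iterate_of_monotoneOn_Ici hf ha k) hz ih).trans hfz

end Preorder

variable [ConditionallyCompleteLattice E] [TopologicalSpace E] [SupConvergenceClass E]

theorem tendsto_iterate_iSup (hf : MonotoneOn f (Ici a)) (ha : a ≤ f a)
    (hbdd : BddAbove (range fun k => f^[k] a)) :
    Tendsto (fun k => f^[k] a) atTop (𝓝 (⨆ k, f^[k] a)) :=
  tendsto_atTop_ciSup (monotone_iterate_of_monotoneOn_Ici hf ha) hbdd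

theorem isLeast_isFixedPt_iSup_iterate [T2Space E] (hf : MonotoneOn f (Ici a)) (ha : a ≤ f a)
    (hbdd : BddAbove (range fun k => f^[k] a)) (hcont : ContinuousAt f (⨆ k, f^[k] a)) :
    IsLeast {z | a ≤ z ∧ IsFixedPt f z} (⨆ k, f^[k] a) :=
  ⟨⟨le_ciSup hbdd 0, isFixedPt_of_tendsto_iterate (tendsto_iterate_iSup hf ha hbdd) hcont⟩,
    fun _ hz => ciSup_le (iterate_le_of_map_le hf ha hz.1 hz.2.le)⟩

end MonotoneIteration

section QuadraticMap

variable {ι 𝕜 : Type*} [Fintype ι]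

/-- The quadratic vector map `x ↦ A (x ⊗ x) + b`, where `x ⊗ x` is indexed by `ι × ι`. -/
def quadraticMap [NonUnitalNonAssocSemiring 𝕜] (A : Matrix ι (ι × ι) 𝕜) (b x : ι → 𝕜) : ι → 𝕜 :=
  A.mulVec (fun p => x p.1 * x p.2) + b

theorem Gmap_eq_quadraticMap (n : ℕ) (α : ℝ) (v : Fin n → ℝ)
    (R : Matrix (Fin n) (Fin n × Fin n) ℝ) :
    Gmap n α v R = quadraticMap (α • R) ((1 - α) • v) := by
  funext x
  rw [Gmap, quadraticMap, Matrix.smul_mulVec]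

theorem continuous_quadraticMap [NonUnitalNonAssocSemiring 𝕜] [TopologicalSpace 𝕜]
    [IsTopologicalSemiring 𝕜] (A : Matrix ι (ι × ι) 𝕜) (b : ι → 𝕜) :
    Continuous (quadraticMap A b) := by
  unfold quadraticMap
  fun_prop

theorem sum_quadraticMap [NonUnitalNonAssocSemiring 𝕜] (A : Matrix ι (ι × ι) 𝕜) (b x : ι → 𝕜) :
    ∑ i, quadraticMap A b x i = ∑ p : ι × ι, (∑ i, A i p) * (x p.1 * x p.2) + ∑ i, b i := by
  simp only [quadraticMap, Matrix.mulVec, dotProduct, Pi.add_apply, Finset.sum_add_distrib,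
    Finset.sum_mul]
  rw [Finset.sum_comm]

section Ordered

variable [Semiring 𝕜] [PartialOrder 𝕜] [IsOrderedRing 𝕜]
  {A : Matrix ι (ι × ι) 𝕜} {b : ι → 𝕜}

theorem monotoneOn_quadraticMap (hA : ∀ i p, 0 ≤ A i p) :
    MonotoneOn (quadraticMap A b) (Ici 0) := by
  intro x hx y hy hxy i
  refine add_le_add_left (Finset.sum_le_sum fun p _ => ?_) (b i)
  exact mul_le_mul_of_nonneg_left (mul_le_mul (hxy _) (hxy _) (hx _) (hy _)) (hA i p)

theorem quadraticMap_nonneg (hA : ∀ i p, 0 ≤ A i p) (hb : 0 ≤ b) {x : ι → 𝕜} (hx : 0 ≤ x) :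
    0 ≤ quadraticMap A b x := fun i =>
  add_nonneg (Finset.sum_nonneg fun p _ => mul_nonneg (hA i p) (mul_nonneg (hx _) (hx _))) (hb i)

theorem sum_quadraticMap_le {a : 𝕜} (hAa : ∀ p, ∑ i, A i p ≤ a) {x : ι → 𝕜} (hx : 0 ≤ x) :
    ∑ i, quadraticMap A b x i ≤ a * (∑ i, x i) ^ 2 + ∑ i, b i := by
  calc ∑ i, quadraticMap A b x i
      = ∑ p : ι × ι, (∑ i, A i p) * (x p.1 * x p.2) + ∑ i, b i := sum_quadraticMap A b x
    _ ≤ ∑ p : ι × ι, a * (x p.1 * x p.2) + ∑ i, b i := by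
        gcongr with p
        · exact mul_nonneg (hx _) (hx _)
        · exact hAa p
    _ = a * (∑ i, x i) ^ 2 + ∑ i, b i := by
        rw [← Finset.mul_sum, Fintype.sum_prod_type, sq, Finset.sum_mul_sum]

theorem mapsTo_quadraticMap_sum_le {a s : 𝕜} (hA : ∀ i p, 0 ≤ A i p) (hb : 0 ≤ b) (ha : 0 ≤ a)
    (hAa : ∀ p, ∑ i, A i p ≤ a) (hs : a * s ^ 2 + ∑ i, b i ≤ s) :
    MapsTo (quadraticMap A b) {x | 0 ≤ x ∧ ∑ i, x i ≤ s} {x | 0 ≤ x ∧ ∑ i, x i ≤ s} := by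
  rintro x ⟨hx, hxs⟩
  have hsum : 0 ≤ ∑ i, x i := Finset.sum_nonneg fun i _ => hx i
  refine ⟨quadraticMap_nonneg hA hb hx, (sum_quadraticMap_le hAa hx).trans (le_trans ?_ hs)⟩
  gcongr

theorem bddAbove_range_iterate_quadraticMap {a s : 𝕜} (hA : ∀ i p, 0 ≤ A i p) (hb : 0 ≤ b)
    (ha : 0 ≤ a) (hs0 : 0 ≤ s) (hAa : ∀ p, ∑ i, A i p ≤ a) (hs : a * s ^ 2 + ∑ i, b i ≤ s) :
    BddAbove (range fun k => (quadraticMap A b)^[k] 0) := by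
  refine ⟨fun _ => s, forall_mem_range.2 fun k i => ?_⟩
  have hzero : (0 : ι → 𝕜) ∈ {x | 0 ≤ x ∧ ∑ i, x i ≤ s} := ⟨le_rfl, by simpa using hs0⟩
  obtain ⟨hnonneg, hsum⟩ := (mapsTo_quadraticMap_sum_le hA hb ha hAa hs).iterate k hzero
  exact (Finset.single_le_sum (fun j _ => hnonneg j) (Finset.mem_univ i)).trans hsum

end Ordered

end QuadraticMap

theorem stmt_6_general {ι : Type*} [Fintype ι] {A : Matrix ι (ι × ι) ℝ} {b : ι → ℝ} {a s : ℝ}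
    (hA : ∀ i p, 0 ≤ A i p) (hb : ∀ i, 0 ≤ b i) (ha : 0 ≤ a) (hAa : ∀ p, ∑ i, A i p ≤ a)
    (hs : a * s ^ 2 + ∑ i, b i ≤ s) {x : ℕ → ι → ℝ} (hx0 : x 0 = 0)
    (hrec : ∀ k, x (k + 1) = quadraticMap A b (x k)) :
    ∃ m : ι → ℝ,
      (∀ i, Tendsto (fun k => x k i) atTop (𝓝 (m i))) ∧
      (∀ i, 0 ≤ m i) ∧ quadraticMap A b m = m ∧
      (∀ z : ι → ℝ, (∀ i, 0 ≤ z i) → quadraticMap A b z = z → ∀ i, m i ≤ z i) := by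
  have hx_iterate : x = fun k => (quadraticMap A b)^[k] 0 := by
    funext k
    induction k with
    | zero => exact hx0
    | succ k ih => rw [hrec, ih, iterate_succ_apply']
  have hmono : MonotoneOn (quadraticMap A b) (Ici 0) := monotoneOn_quadraticMap hA
  have hzero : 0 ≤ quadraticMap A b 0 := quadraticMap_nonneg hA hb le_rfl
  have hs0 : 0 ≤ s :=
    (add_nonneg (mul_nonneg ha (sq_nonneg s)) (Fintype.sum_nonneg (f := b) hb)).trans hs
  have hbdd := bddAbove_range_iterate_quadraticMap hA hb ha hs0 hAa hs
  have hlim := tendsto_iterate_iSup hmono hzero hbdd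
  obtain ⟨⟨hnonneg, hfix⟩, hleast⟩ := isLeast_isFixedPt_iSup_iterate hmono hzero hbdd
    (continuous_quadraticMap A b).continuousAt
  subst hx_iterate
  exact ⟨_, tendsto_pi_nhds.1 hlim, hnonneg, hfix, fun z hz hGz => hleast ⟨hz, hGz⟩⟩

theorem stmt_6 (n : ℕ) (hn : 1 ≤ n) (α : ℝ) (hα : α ∈ Set.Ioo (0:ℝ) 1)
    (v : Fin n → ℝ) (hv : ∀ i, 0 ≤ v i) (hv1 : ∑ i, v i = 1)
    (R : Matrix (Fin n) (Fin n × Fin n) ℝ) (hR : ∀ i j, 0 ≤ R i j)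
    (hRs : ∀ j, ∑ i, R i j = 1)
    (x : ℕ → Fin n → ℝ) (hx0 : x 0 = 0)
    (hrec : ∀ k, x (k + 1) = Gmap n α v R (x k)) :
    ∃ m : Fin n → ℝ,
      (∀ i, Filter.Tendsto (fun k => x k i) Filter.atTop (nhds (m i))) ∧
      (∀ i, 0 ≤ m i) ∧ Gmap n α v R m = m ∧
      (∀ z : Fin n → ℝ, (∀ i, 0 ≤ z i) → Gmap n α v R z = z → ∀ i, m i ≤ z i) := by
  rw [Gmap_eq_quadraticMap] at hrec ⊢
  exact stmt_6_general (a := α) (s := 1) (fun i p => mul_nonneg hα.1.le (hR i p))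
    (fun i => mul_nonneg (sub_nonneg.2 hα.2.le) (hv i)) hα.1.le
    (fun p => by simp [← Finset.mul_sum, hRs]) (by simp [← Finset.mul_sum, hv1]) hx0 hrec
end

section
/- For every α ∈ (0,1) there exists a nonnegative solution x of x = α R(x ⊗ x) + (1-α)v with 1ᵀx = 1, and also a nonnegative solution with 1ᵀx = (1-α)/α. -/
/-!
On the level set `{x ≥ 0 : ∑ i, x i = u}` the map `Gmap` is continuous, nonnegative and of constant
coordinate sum `α * u ^ 2 + (1 - α)`. This equals `u` exactly for the two roots `u = 1` and
`u = (1 - α) / α`, so for these Brouwer's theorem on the level set gives a fixed point.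

Brouwer's theorem for the simplex comes from a combinatorial argument of Scarf that needs no
triangulations. Take finitely many points of the simplex, ordered by each coordinate, and adjoin the
corners. Dominant sets take the place of simplices: a dominant set with one point too few extends to
exactly two full ones, unless it consists of all corners but one, when the extension is unique. As
with Sperner's lemma, double counting then yields a dominant set showing all colours, and it is
small when the points are dense. Colouring `x` by an `i` with `x i ≤ g x i` and passing to the limit
by compactness produces a point where this holds for every `i`, that is, a fixed point.
-/

open Finset

theorem image_erase_of_map_eq {ι X : Type*} [DecidableEq ι] [DecidableEq X] {c : X → ι}
    {S : Finset X} {a b : X} (hb : b ∈ S) (hab : a ≠ b)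
    (hc : c a = c b) : (S.erase a).image c = S.image c := by
  refine (image_subset_image (erase_subset a S)).antisymm fun y hy ↦ ?_
  obtain ⟨x, hx, rfl⟩ := mem_image.1 hy
  by_cases hxa : x = a
  · exact mem_image.2 ⟨b, mem_erase.2 ⟨hab.symm, hb⟩, hxa ▸ hc.symm⟩
  · exact mem_image_of_mem c (mem_erase.2 ⟨hxa, hx⟩)

section Pivot

variable {ι X β : Type*} [LinearOrder β] {f : ι → X → β} {D S : Finset X} {i j k : ι} {x y z : X}

/-- Scarf's dominance: in the orders on `X` given by the `f i`, no point lies strictly above the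
minimum of `S` for every `i` at once. These sets play the role of the faces of a triangulation. -/
def IsDominant (f : ι → X → β) (S : Finset X) : Prop :=
  ∀ y, ∃ i, ∀ x ∈ S, f i y ≤ f i x

/-- The points that could be adjoined to `D` without becoming the minimum for any order other than
the `k`-th. -/
def pivotCandidates (f : ι → X → β) (D : Finset X) (k : ι) : Set X :=
  {z | ∀ l ≠ k, ∃ d ∈ D, f l d < f l z}

/-- The outcome of a pivot step at `D` in direction `k`: a candidate that is as high as possible
for the `k`-th order. -/
def IsPivot (f : ι → X → β) (D : Finset X) (k : ι) (x : X) : Prop :=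
  x ∈ pivotCandidates f D k ∧ ∀ z ∈ pivotCandidates f D k, f k z ≤ f k x

theorem IsPivot.exists_of_nonempty [Finite X] (h : (pivotCandidates f D k).Nonempty) :
    ∃ x, IsPivot f D k x :=
  Set.exists_max_image _ (f k) (Set.toFinite _) h

theorem IsPivot.eq (hf : Function.Injective (f k)) (hx : IsPivot f D k x) (hy : IsPivot f D k y) :
    x = y :=
  hf (le_antisymm (hy.2 x hx.1) (hx.2 y hy.1))

theorem IsDominant.mono (hS : IsDominant f S) (hDS : D ⊆ S) : IsDominant f D := fun y ↦
  let ⟨i, hi⟩ := hS y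
  ⟨i, fun x hx ↦ hi x (hDS hx)⟩

theorem IsDominant.le_of_mem_pivotCandidates (hS : IsDominant f S) (hDS : D ⊆ S)
    (hz : z ∈ pivotCandidates f D k) (hx : x ∈ S) : f k z ≤ f k x := by
  obtain ⟨l, hl⟩ := hS z
  obtain rfl : l = k := by
    by_contra hlk
    obtain ⟨d, hd, hlt⟩ := hz l hlk
    exact hlt.not_ge (hl d (hDS hd))
  exact hl x hx

theorem IsDominant.insert_isPivot [DecidableEq X] (hD : IsDominant f D) (hx : IsPivot f D k x) :
    IsDominant f (insert x D) := by
  intro y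
  by_cases hy : y ∈ pivotCandidates f D k
  · exact ⟨k, (forall_mem_insert ..).2
      ⟨hx.2 y hy, fun d hd ↦ hD.le_of_mem_pivotCandidates subset_rfl hy hd⟩⟩
  · simp only [pivotCandidates, Set.mem_ofPred_eq, not_forall, not_exists, not_and, not_lt] at hy
    obtain ⟨l, hlk, hl⟩ := hy
    obtain ⟨d, hd, hdx⟩ := hx.1 l hlk
    exact ⟨l, (forall_mem_insert ..).2 ⟨(hl d hd).trans hdx.le, hl⟩⟩

theorem IsDominant.notMem_of_mem_pivotCandidates (hD : IsDominant f D)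
    (hf : Function.Injective (f i)) (hij : i ≠ j) (hx : x ∈ pivotCandidates f D i) (hy : y ∈ D)
    (hyi : ∀ d ∈ D, f i y ≤ f i d) (hyj : ∀ d ∈ D, f j y ≤ f j d) : x ∉ D := by
  intro hxD
  obtain rfl : x = y := hf (le_antisymm (hD.le_of_mem_pivotCandidates subset_rfl hx hy) (hyi x hxD))
  obtain ⟨d, hd, hlt⟩ := hx j hij.symm
  exact hlt.not_ge (hyj d hd)

theorem IsDominant.ne_of_mem_pivotCandidates (hD : IsDominant f D) (hij : i ≠ j)
    (hx : x ∈ pivotCandidates f D i) (hz : z ∈ pivotCandidates f D j) (hy : y ∈ D)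
    (hyi : ∀ d ∈ D, f i y ≤ f i d) : x ≠ z := by
  rintro rfl
  obtain ⟨d, hd, hlt⟩ := hz i hij
  exact hlt.not_ge ((hD.le_of_mem_pivotCandidates subset_rfl hx hy).trans (hyi d hd))

theorem IsDominant.exists_isPivot_of_insert [Fintype ι] [DecidableEq X]
    (hf : ∀ i, Function.Injective (f i)) (hxD : x ∉ D) (hdom : IsDominant f (insert x D))
    (hcard : #D + 1 = Fintype.card ι) {m : ι → X} (hmD : ∀ i, m i ∈ D)
    (hmin : ∀ i, ∀ d ∈ D, f i (m i) ≤ f i d) :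
    ∃ k, Set.InjOn m {k}ᶜ ∧ IsPivot f D k x := by
  classical
  obtain ⟨k, hk⟩ := hdom x
  have hsurj : ∀ d ∈ D, ∃ l ≠ k, m l = d ∧ f l d < f l x := by
    intro d hd
    obtain ⟨l, hl⟩ := hdom d
    have hdx : f l d < f l x := (hl x (mem_insert_self x D)).lt_of_ne
      fun h ↦ hxD (hf l h ▸ hd)
    refine ⟨l, ?_, hf l (le_antisymm (hmin l d hd) (hl _ (mem_insert_of_mem (hmD l)))), hdx⟩
    rintro rfl
    exact hdx.not_ge (hk d (mem_insert_of_mem hd))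
  have hinj : Set.InjOn m {k}ᶜ := by
    have hinj' : Set.InjOn m (univ.erase k : Finset ι) := by
      refine injOn_of_surjOn_of_card_le m (t := D) (fun l _ ↦ hmD l) (fun d hd ↦ ?_) ?_
      · obtain ⟨l, hlk, hld, -⟩ := hsurj d hd
        exact ⟨l, by simpa using hlk, hld⟩
      · rw [card_erase_of_mem (mem_univ k), card_univ, ← hcard, Nat.add_sub_cancel]
    simpa [Set.compl_eq_univ_sdiff] using hinj'
  refine ⟨k, hinj, fun l hlk ↦ ⟨m l, hmD l, ?_⟩, fun z hz ↦
    hdom.le_of_mem_pivotCandidates (subset_insert x D) hz (mem_insert_self x D)⟩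
  obtain ⟨l', hl'k, hml, hlt⟩ := hsurj (m l) (hmD l)
  exact hinj hl'k hlk hml ▸ hlt

end Pivot

section RoomsAndDoors

variable {ι X β : Type*} [Fintype ι] [Fintype X] [LinearOrder β]
  {f : ι → X → β} {c : X → ι} {i₀ : ι} {D S : Finset X}

open scoped Classical in
/-- The dominant sets with as many points as there are orders, the analogue of the maximal
simplices of a triangulation. -/
noncomputable def rooms (f : ι → X → β) : Finset (Finset X) :=
  {S | IsDominant f S ∧ #S = Fintype.card ι}

/-- The sets on which the colouring `c` is a bijection onto all colours but `i₀`; two rooms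
communicate through a door contained in both. -/
def doors [DecidableEq ι] (c : X → ι) (i₀ : ι) : Finset (Finset X) :=
  {D | D.image c = univ.erase i₀ ∧ #D + 1 = Fintype.card ι}

theorem mem_rooms : S ∈ rooms f ↔ IsDominant f S ∧ #S = Fintype.card ι := by
  simp [rooms]

theorem mem_doors [DecidableEq ι] :
    D ∈ doors c i₀ ↔ D.image c = univ.erase i₀ ∧ #D + 1 = Fintype.card ι := by
  simp [doors]

theorem mem_rooms_and_covBy [DecidableEq X] (hcard : #D + 1 = Fintype.card ι) :
    S ∈ rooms f ∧ D ⋖ S ↔ ∃ x ∉ D, IsDominant f (insert x D) ∧ insert x D = S := by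
  rw [mem_rooms, covBy_iff_exists_insert]
  constructor
  · rintro ⟨⟨hS, -⟩, x, hx, rfl⟩
    exact ⟨x, hx, hS, rfl⟩
  · rintro ⟨x, hx, hS, rfl⟩
    exact ⟨⟨hS, by rw [card_insert_of_notMem hx, hcard]⟩, x, hx, rfl⟩

open scoped Classical in
theorem even_card_rooms_covBy (hf : ∀ i, Function.Injective (f i)) (hne : D.Nonempty)
    (hcard : #D + 1 = Fintype.card ι) (hpivot : ∀ k, (pivotCandidates f D k).Nonempty) :
    Even #{S ∈ rooms f | D ⋖ S} := by
  by_cases hD : IsDominant f D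
  swap
  · suffices {S ∈ rooms f | D ⋖ S} = ∅ by simp [this]
    exact filter_eq_empty_iff.2 fun S hS hDS ↦ hD ((mem_rooms.1 hS).1.mono hDS.le)
  -- `D` has fewer points than there are orders, so one point is the minimum for two orders `i` and
  -- `j`; the rooms adjacent to `D` arise from pivoting in exactly these two directions.
  choose m hmD hmin using fun i ↦ D.exists_min_image (f i) hne
  choose p hp using fun k ↦ IsPivot.exists_of_nonempty (hpivot k)
  obtain ⟨i, -, j, -, hij, hmij⟩ := exists_ne_map_eq_of_card_lt_of_maps_to
    (s := (univ : Finset ι)) (t := D) (f := m) (by rw [card_univ]; omega) (fun i _ ↦ hmD i)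
  have hpi : p i ∉ D := hD.notMem_of_mem_pivotCandidates (hf i) hij (hp i).1 (hmD i) (hmin i)
    (hmij ▸ hmin j)
  have hpj : p j ∉ D := hD.notMem_of_mem_pivotCandidates (hf j) hij.symm (hp j).1 (hmD j)
    (hmin j) (hmij ▸ hmin i)
  have hpij : p i ≠ p j :=
    hD.ne_of_mem_pivotCandidates hij (hp i).1 (hp j).1 (hmD i) (hmin i)
  have hrooms : {S ∈ rooms f | D ⋖ S} = {insert (p i) D, insert (p j) D} := by
    ext S
    rw [mem_filter, mem_rooms_and_covBy hcard, mem_insert, mem_singleton]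
    constructor
    · rintro ⟨x, hxD, hx, rfl⟩
      obtain ⟨k, hinj, hk⟩ := hx.exists_isPivot_of_insert hf hxD hcard hmD hmin
      obtain rfl := hk.eq (hf k) (hp k)
      have hk' : i = k ∨ j = k := by
        by_contra! h
        exact hij (hinj h.1 h.2 hmij)
      rcases hk' with rfl | rfl <;> simp
    · rintro (rfl | rfl)
      exacts [⟨_, hpi, hD.insert_isPivot (hp i), rfl⟩, ⟨_, hpj, hD.insert_isPivot (hp j), rfl⟩]
  rw [hrooms, card_pair fun h ↦ hpij ((insert_inj hpi).1 h)]
  exact even_two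

theorem injOn_of_mem_doors [DecidableEq ι] (hD : D ∈ doors c i₀) : Set.InjOn c D := by
  obtain ⟨himage, hcard⟩ := mem_doors.1 hD
  refine injOn_of_card_image_eq ?_
  rw [himage, card_erase_of_mem (mem_univ i₀), card_univ, ← hcard, Nat.add_sub_cancel]

theorem image_eq_of_mem_doors_of_covBy [DecidableEq ι] (hD : D ∈ doors c i₀) (hDS : D ⋖ S)
    (hS : S.image c ≠ univ) : S.image c = univ.erase i₀ := by
  classical
  obtain ⟨x, -, rfl⟩ := covBy_iff_exists_insert.1 hDS
  rw [image_insert, (mem_doors.1 hD).1] at hS ⊢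
  refine insert_eq_of_mem (mem_erase.2 ⟨?_, mem_univ _⟩)
  rintro rfl
  exact hS (insert_erase (mem_univ _))

open scoped Classical in
theorem even_card_doors_covBy (hcard : #S = Fintype.card ι) (hS : S.image c ≠ univ) :
    Even #{D ∈ doors c i₀ | D ⋖ S} := by
  obtain hempty | ⟨D₀, hD₀⟩ := {D ∈ doors c i₀ | D ⋖ S}.eq_empty_or_nonempty
  · simp [hempty]
  obtain ⟨hD₀, hD₀S⟩ := mem_filter.1 hD₀
  have himage := image_eq_of_mem_doors_of_covBy hD₀ hD₀S hS
  obtain ⟨a, ha, b, hb, hab, hcab⟩ := exists_ne_map_eq_of_card_lt_of_maps_to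
    (s := S) (t := univ.erase i₀) (f := c)
    (by rw [hcard, ← card_univ]; exact card_erase_lt_of_mem (mem_univ i₀))
    (fun x hx ↦ himage ▸ mem_image_of_mem c hx)
  have herase : ∀ x ∈ S, ∀ y ∈ S, x ≠ y → c x = c y → S.erase x ∈ doors c i₀ := by
    intro x hx y hy hxy hc
    rw [mem_doors, image_erase_of_map_eq hy hxy hc, card_erase_add_one hx]
    exact ⟨himage, hcard⟩
  have hdoors : {D ∈ doors c i₀ | D ⋖ S} = {S.erase a, S.erase b} := by
    ext D
    rw [mem_filter, mem_insert, mem_singleton]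
    constructor
    · rintro ⟨hD, hDS⟩
      obtain ⟨x, hx, rfl⟩ := covBy_iff_exists_erase.1 hDS
      by_contra! h
      have hax : a ≠ x := by rintro rfl; exact h.1 rfl
      have hbx : b ≠ x := by rintro rfl; exact h.2 rfl
      exact hab (injOn_of_mem_doors hD (by simp [ha, hax]) (by simp [hb, hbx]) hcab)
    · rintro (rfl | rfl)
      exacts [⟨herase a ha b hb hab hcab, erase_covBy ha⟩,
        ⟨herase b hb a ha hab.symm hcab.symm, erase_covBy hb⟩]
  rw [hdoors, card_pair ((erase_inj S ha).not.2 hab)]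
  exact even_two

open scoped Classical in
theorem exists_isDominant_image_eq_univ_of_odd
    (hodd : Odd (∑ D ∈ doors c i₀, #{S ∈ rooms f | D ⋖ S})) :
    ∃ S, IsDominant f S ∧ S.image c = univ := by
  by_contra! hcon
  have hcount : ∑ D ∈ doors c i₀, #{S ∈ rooms f | D ⋖ S} =
      ∑ S ∈ rooms f, #{D ∈ doors c i₀ | D ⋖ S} :=
    sum_card_bipartiteAbove_eq_sum_card_bipartiteBelow (· ⋖ ·)
  have heven : Even (∑ S ∈ rooms f, #{D ∈ doors c i₀ | D ⋖ S}) := even_sum _ fun S hS ↦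
    even_card_doors_covBy (mem_rooms.1 hS).2 (hcon S (mem_rooms.1 hS).1)
  exact Nat.not_even_iff_odd.2 hodd (hcount ▸ heven)

end RoomsAndDoors

section Corners

variable {ι T β : Type*} [LinearOrder β] {f : ι → T ⊕ ι → β}

/-- Orders on the points `T` together with one corner per order: the `i`-th corner is lowest for
the `i`-th order, and all other corners lie above `T`. This is how the vertices of a simplex
compare with its interior points. -/
structure HasCorners (f : ι → T ⊕ ι → β) : Prop where
  injective : ∀ i, Function.Injective (f i)
  inr_lt_inl : ∀ i a, f i (Sum.inr i) < f i (Sum.inl a)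
  inl_lt_inr : ∀ {i j} (a), j ≠ i → f i (Sum.inl a) < f i (Sum.inr j)
  inr_lt_inr : ∀ {i j}, j ≠ i → f i (Sum.inr i) < f i (Sum.inr j)

theorem HasCorners.inr_le (hf : HasCorners f) (i : ι) : ∀ x, f i (Sum.inr i) ≤ f i x
  | .inl a => (hf.inr_lt_inl i a).le
  | .inr j => by
    by_cases hj : j = i
    · rw [hj]
    · exact (hf.inr_lt_inr hj).le

theorem HasCorners.nonempty_pivotCandidates (hf : HasCorners f) {D : Finset (T ⊕ ι)} {a : T}
    (ha : Sum.inl a ∈ D) (k : ι) : (pivotCandidates f D k).Nonempty :=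
  ⟨Sum.inr k, fun _ hl ↦ ⟨_, ha, hf.inl_lt_inr a hl.symm⟩⟩

variable [Fintype ι] [DecidableEq ι]

/-- The corners other than the `i₀`-th: the only door on the boundary. -/
def boundaryDoor (T : Type*) (i₀ : ι) : Finset (T ⊕ ι) :=
  (univ.erase i₀).map .inr

theorem inr_mem_boundaryDoor {i₀ j : ι} : Sum.inr j ∈ boundaryDoor T i₀ ↔ j ≠ i₀ := by
  simp [boundaryDoor]

theorem inl_notMem_boundaryDoor {i₀ : ι} {a : T} : Sum.inl a ∉ boundaryDoor T i₀ := by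
  simp [boundaryDoor]

theorem card_boundaryDoor_add_one (i₀ : ι) : #(boundaryDoor T i₀) + 1 = Fintype.card ι := by
  rw [boundaryDoor, card_map, card_erase_add_one (mem_univ i₀), card_univ]

theorem HasCorners.isDominant_insert_boundaryDoor [DecidableEq T] (hf : HasCorners f) {i₀ : ι}
    {b : T} (hb : ∀ a, f i₀ (Sum.inl a) ≤ f i₀ (Sum.inl b)) :
    IsDominant f (insert (Sum.inl b) (boundaryDoor T i₀))
  | .inr j => ⟨j, fun x _ ↦ hf.inr_le j x⟩
  | .inl a => by
    refine ⟨i₀, (forall_mem_insert ..).2 ⟨hb a, ?_⟩⟩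
    rintro (a' | j) hx
    · exact absurd hx inl_notMem_boundaryDoor
    · exact (hf.inl_lt_inr a (inr_mem_boundaryDoor.1 hx)).le

theorem HasCorners.inl_le_of_isDominant_insert_boundaryDoor [DecidableEq T] (hf : HasCorners f)
    {i₀ : ι} {x : T ⊕ ι} (hx : IsDominant f (insert x (boundaryDoor T i₀))) (a : T) :
    f i₀ (Sum.inl a) ≤ f i₀ x := by
  obtain ⟨i, hi⟩ := hx (Sum.inl a)
  by_cases h : i = i₀
  · exact h ▸ hi x (mem_insert_self _ _)
  · exact absurd (hi _ (mem_insert_of_mem (inr_mem_boundaryDoor.2 h))) (hf.inr_lt_inl i a).not_ge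

variable [Fintype T]

open scoped Classical in
theorem HasCorners.card_rooms_boundaryDoor_covBy [Nonempty T] (hf : HasCorners f) (i₀ : ι) :
    #{S ∈ rooms f | boundaryDoor T i₀ ⋖ S} = 1 := by
  obtain ⟨b, -, hb⟩ := (univ : Finset T).exists_max_image (fun a ↦ f i₀ (.inl a)) univ_nonempty
  simp only [mem_univ, forall_const] at hb
  rw [card_eq_one]
  refine ⟨insert (Sum.inl b) (boundaryDoor T i₀), ?_⟩
  ext S
  rw [mem_filter, mem_rooms_and_covBy (card_boundaryDoor_add_one i₀), mem_singleton]
  constructor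
  · rintro ⟨x, hxD, hx, rfl⟩
    have hbx := hf.inl_le_of_isDominant_insert_boundaryDoor hx b
    obtain a | j := x
    · rw [hf.injective i₀ ((hb a).antisymm hbx)]
    · obtain rfl : j = i₀ := not_not.1 (inr_mem_boundaryDoor.not.1 hxD)
      exact absurd hbx (hf.inr_lt_inl j b).not_ge
  · rintro rfl
    exact ⟨_, inl_notMem_boundaryDoor, hf.isDominant_insert_boundaryDoor hb, rfl⟩

theorem boundaryDoor_mem_doors (c : T → ι) (i₀ : ι) :
    boundaryDoor T i₀ ∈ doors (Sum.elim c id) i₀ := by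
  refine mem_doors.2 ⟨?_, card_boundaryDoor_add_one i₀⟩
  ext i
  simp [boundaryDoor]

theorem exists_inl_mem_of_mem_doors {c : T → ι} {i₀ : ι} {D : Finset (T ⊕ ι)}
    (hD : D ∈ doors (Sum.elim c id) i₀) (hne : D ≠ boundaryDoor T i₀) : ∃ a, Sum.inl a ∈ D := by
  by_contra! hno
  refine hne (eq_of_subset_of_card_le ?_ ?_)
  · rintro (a | j) hx
    · exact absurd hx (hno a)
    · have hj := mem_image_of_mem (Sum.elim c id) hx
      rw [(mem_doors.1 hD).1, mem_erase] at hj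
      exact inr_mem_boundaryDoor.2 hj.1
  · have hcard := (mem_doors.1 hD).2
    rw [← card_boundaryDoor_add_one (T := T) i₀] at hcard
    omega

open scoped Classical in
theorem HasCorners.odd_sum_card_rooms_covBy [Nonempty T] (hf : HasCorners f) (c : T → ι)
    (i₀ : ι) : Odd (∑ D ∈ doors (Sum.elim c id) i₀, #{S ∈ rooms f | D ⋖ S}) := by
  rw [← add_sum_erase _ _ (boundaryDoor_mem_doors c i₀), hf.card_rooms_boundaryDoor_covBy i₀]
  refine odd_one.add_even (even_sum _ fun D hD ↦ ?_)
  obtain ⟨hne, hD⟩ := mem_erase.1 hD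
  obtain ⟨a, ha⟩ := exists_inl_mem_of_mem_doors hD hne
  exact even_card_rooms_covBy hf.injective ⟨_, ha⟩ (mem_doors.1 hD).2
    (hf.nonempty_pivotCandidates ha)

end Corners

section Scarf

variable {ι T β : Type*} [LinearOrder β]

/-- The orders `g i` on `T` extended to `T ⊕ ι`, with the points of `T` enumerated by `r` to break
ties and the corners enumerated by `s`: the `i`-th corner becomes `⊥`, the others are put on top. -/
def cornerOrder [DecidableEq ι] (g : ι → T → β) (r : T → ℕ) (s : ι → ℕ) (i : ι) :
    T ⊕ ι → WithBot ((β ×ₗ ℕ) ⊕ₗ ℕ) :=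
  Sum.elim (fun a ↦ ↑(Sum.inlₗ (toLex (g i a, r a)) : (β ×ₗ ℕ) ⊕ₗ ℕ))
    (fun j ↦ if j = i then ⊥ else ↑(Sum.inrₗ (s j) : (β ×ₗ ℕ) ⊕ₗ ℕ))

theorem hasCorners_cornerOrder [DecidableEq ι] (g : ι → T → β) {r : T → ℕ} {s : ι → ℕ}
    (hr : Function.Injective r) (hs : Function.Injective s) : HasCorners (cornerOrder g r s) where
  injective i := by
    rintro (a | j) (b | k) h
    · have h' : g i a = g i b ∧ r a = r b := by simpa [cornerOrder] using h
      rw [hr h'.2]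
    · by_cases hk : k = i <;> simp [cornerOrder, hk] at h
    · by_cases hj : j = i <;> simp [cornerOrder, hj] at h
    · by_cases hj : j = i <;> by_cases hk : k = i <;> simp_all [cornerOrder, hs.eq_iff]
  inr_lt_inl i a := by simp [cornerOrder, WithBot.bot_lt_coe]
  inl_lt_inr {i j} a hj := by simp [cornerOrder, hj]
  inr_lt_inr {i j} hj := by simp [cornerOrder, hj, WithBot.bot_lt_coe]

theorem le_of_cornerOrder_inl_le [DecidableEq ι] {g : ι → T → β} {r : T → ℕ} {s : ι → ℕ} {i : ι}
    {a b : T} (h : cornerOrder g r s i (.inl a) ≤ cornerOrder g r s i (.inl b)) :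
    g i a ≤ g i b := by
  have h' := Sum.Lex.inl_le_inl_iff.1 (WithBot.coe_le_coe.1 h)
  exact Prod.Lex.monotone_fst _ _ h'

/-- **Scarf's lemma**, with the corners eliminated: `C` collects the indices whose corner is missing
from a fully coloured room, and `S` the points of that room that are not corners. -/
theorem exists_dominant_forall_exists_color_eq [Finite ι] [Nonempty ι] [Finite T] [Nonempty T]
    (g : ι → T → β) (c : T → ι) :
    ∃ (S : Finset T) (C : Finset ι), (∀ a, ∃ i ∈ C, ∀ b ∈ S, g i a ≤ g i b) ∧
      ∀ i ∈ C, ∃ b ∈ S, c b = i := by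
  classical
  cases nonempty_fintype T
  cases nonempty_fintype ι
  obtain ⟨r, hr⟩ := exists_injective_nat T
  obtain ⟨s, hs⟩ := exists_injective_nat ι
  have hf := hasCorners_cornerOrder g hr hs
  obtain ⟨S, hS, hcol⟩ := exists_isDominant_image_eq_univ_of_odd
    (hf.odd_sum_card_rooms_covBy c (Classical.arbitrary ι))
  refine ⟨S.toLeft, ({i | Sum.inr i ∉ S} : Finset ι), fun a ↦ ?_, fun i hi ↦ ?_⟩
  · obtain ⟨i, hi⟩ := hS (.inl a)
    refine ⟨i, ?_, fun b hb ↦ le_of_cornerOrder_inl_le (hi _ (mem_toLeft.1 hb))⟩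
    exact mem_filter.2 ⟨mem_univ i, fun h ↦ (hi _ h).not_gt (hf.inr_lt_inl i a)⟩
  · obtain ⟨x, hx, hxi⟩ := mem_image.1 (hcol ▸ mem_univ i)
    obtain b | j := x
    · exact ⟨b, mem_toLeft.2 hx, hxi⟩
    · exact absurd ((show j = i from hxi) ▸ hx) (mem_filter.1 hi).2

end Scarf

section Simplex

variable {ι : Type*} [Fintype ι]

theorem one_sub_sum_lt_of_dense [Nonempty ι] {t : Set (ι → ℝ)} {δ : ℝ} {m : ι → ℝ}
    (ht : stdSimplex ℝ ι ⊆ ⋃ y ∈ t, Metric.ball y δ) (hm : ∀ i, 0 ≤ m i) (hsum : ∑ i, m i ≤ 1)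
    (hle : ∀ y ∈ t, ∃ i, y i ≤ m i) : 1 - ∑ i, m i < Fintype.card ι * δ := by
  have hcard : (0 : ℝ) < Fintype.card ι := by exact_mod_cast Fintype.card_pos
  -- Spread the deficit evenly to raise `m` into the simplex; a point of `t` near the result
  -- exceeds `m` in every coordinate unless the deficit is small.
  have hw : (fun i ↦ m i + (1 - ∑ j, m j) / Fintype.card ι) ∈ stdSimplex ℝ ι := by
    refine ⟨fun i ↦ add_nonneg (hm i) (div_nonneg (sub_nonneg.2 hsum) hcard.le), ?_⟩
    rw [sum_add_distrib, sum_const, card_univ, nsmul_eq_mul, mul_div_cancel₀ _ hcard.ne',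
      add_sub_cancel]
  obtain ⟨y, hyt, hwy⟩ := Set.mem_iUnion₂.1 (ht hw)
  obtain ⟨i, hi⟩ := hle y hyt
  have hdist : |m i + (1 - ∑ j, m j) / Fintype.card ι - y i| < δ :=
    (dist_le_pi_dist _ y i).trans_lt hwy
  rw [← div_lt_iff₀' hcard]
  linarith [le_abs_self (m i + (1 - ∑ j, m j) / Fintype.card ι - y i)]

theorem le_add_one_sub_sum {b m : ι → ℝ} (hb : ∑ i, b i = 1) (hmb : ∀ i, m i ≤ b i) (i : ι) :
    b i ≤ m i + (1 - ∑ j, m j) := by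
  have h := single_le_sum (f := fun j ↦ b j - m j) (fun j _ ↦ sub_nonneg.2 (hmb j)) (mem_univ i)
  rw [sum_sub_distrib, hb] at h
  linarith

theorem exists_cell_of_dense [Nonempty ι] {t : Set (ι → ℝ)} (htΔ : t ⊆ stdSimplex ℝ ι) {δ : ℝ}
    (htfin : t.Finite) (ht : stdSimplex ℝ ι ⊆ ⋃ y ∈ t, Metric.ball y δ) (c : (ι → ℝ) → ι) :
    ∃ m : ι → ℝ, 1 - ∑ i, m i < Fintype.card ι * δ ∧ (∃ p ∈ t, ∀ i, m i ≤ p i) ∧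
      ∀ i, m i = 0 ∨ ∃ b ∈ t, c b = i ∧ ∀ j, m j ≤ b j := by
  classical
  have htne : t.Nonempty := by
    obtain ⟨y, hy, -⟩ := Set.mem_iUnion₂.1 (ht (single_mem_stdSimplex ℝ (Classical.arbitrary ι)))
    exact ⟨y, hy⟩
  have := htne.to_subtype
  have := htfin.to_subtype
  obtain ⟨S, C, hdom, hcol⟩ :=
    exists_dominant_forall_exists_color_eq (fun i (a : t) ↦ a.1 i) (fun a ↦ c a)
  obtain ⟨i₁, hi₁, -⟩ := hdom (Classical.arbitrary t)
  obtain ⟨p, hp, -⟩ := hcol i₁ hi₁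
  let m : ι → ℝ := fun i ↦ if i ∈ C then S.inf' ⟨p, hp⟩ (fun a ↦ a.1 i) else 0
  have hmle : ∀ b ∈ S, ∀ i, m i ≤ b.1 i := by
    intro b hb i
    by_cases hi : i ∈ C
    · simpa only [m, if_pos hi] using inf'_le (fun a : t ↦ a.1 i) hb
    · simpa only [m, if_neg hi] using (htΔ b.2).1 i
  have hm0 : ∀ i, 0 ≤ m i := by
    intro i
    by_cases hi : i ∈ C
    · simpa only [m, if_pos hi] using le_inf' _ _ fun a _ ↦ (htΔ a.2).1 i
    · simp only [m, if_neg hi, le_refl]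
  have hle : ∀ y ∈ t, ∃ i, y i ≤ m i := by
    intro y hy
    obtain ⟨i, hi, hiS⟩ := hdom ⟨y, hy⟩
    exact ⟨i, by simpa only [m, if_pos hi] using le_inf' _ _ hiS⟩
  have hsum : ∑ i, m i ≤ 1 := (htΔ p.2).2 ▸ sum_le_sum fun i _ ↦ hmle p hp i
  refine ⟨m, one_sub_sum_lt_of_dense ht hm0 hsum hle, ⟨p, p.2, hmle p hp⟩, fun i ↦ ?_⟩
  by_cases hi : i ∈ C
  · obtain ⟨b, hb, hbc⟩ := hcol i hi
    exact .inr ⟨b, b.2, hbc, hmle b hb⟩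
  · exact .inl (if_neg hi)

theorem exists_mem_stdSimplex_forall_color_near_or_lt [Nonempty ι] (c : (ι → ℝ) → ι) {ε : ℝ}
    (hε : 0 < ε) : ∃ p ∈ stdSimplex ℝ ι, ∀ i,
      (∃ q ∈ stdSimplex ℝ ι, c q = i ∧ dist q p < ε) ∨ p i < ε := by
  have hcard : (0 : ℝ) < Fintype.card ι := by exact_mod_cast Fintype.card_pos
  obtain ⟨t, htΔ, htfin, ht⟩ :=
    (isCompact_stdSimplex ℝ ι).finite_cover_balls (div_pos hε hcard)
  obtain ⟨m, hm, ⟨p, hp, hmp⟩, hcol⟩ := exists_cell_of_dense htΔ htfin ht c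
  rw [mul_div_cancel₀ _ hcard.ne'] at hm
  have hup : ∀ b ∈ t, (∀ j, m j ≤ b j) → ∀ i, b i < m i + ε := fun b hb hmb i ↦
    (le_add_one_sub_sum (htΔ hb).2 hmb i).trans_lt (by gcongr)
  refine ⟨p, htΔ hp, fun i ↦ (hcol i).symm.imp ?_ fun hmi ↦ ?_⟩
  · rintro ⟨b, hb, hbc, hmb⟩
    refine ⟨b, htΔ hb, hbc, (dist_pi_lt_iff hε).2 fun j ↦ ?_⟩
    rw [Real.dist_eq, abs_sub_lt_iff]
    constructor <;> linarith [hmb j, hmp j, hup b hb hmb j, hup p hp hmp j]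
  · simpa [hmi] using hup p hp hmp i

theorem exists_mem_stdSimplex_forall_mem_of_isClosed [Nonempty ι] {A : ι → Set (ι → ℝ)}
    (hA : ∀ i, IsClosed (A i)) (hcover : stdSimplex ℝ ι ⊆ ⋃ i, A i)
    (hfacet : ∀ x ∈ stdSimplex ℝ ι, ∀ i, x i = 0 → x ∈ A i) :
    ∃ x ∈ stdSimplex ℝ ι, ∀ i, x ∈ A i := by
  classical
  by_contra! hcon
  have hopen : ∀ i, IsOpen (A i ∪ {x | x i = 0})ᶜ := fun i ↦
    ((hA i).union (isClosed_eq (continuous_apply i) continuous_const)).isOpen_compl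
  obtain ⟨ε, hε, hball⟩ := lebesgue_number_lemma_of_metric (isCompact_stdSimplex ℝ ι) hopen
    fun x hx ↦ by
      obtain ⟨i, hi⟩ := hcon x hx
      exact Set.mem_iUnion.2 ⟨i, fun h ↦ hi (h.elim id (hfacet x hx i))⟩
  have hcolor : ∀ x, ∃ i, x ∈ stdSimplex ℝ ι → x ∈ A i := by
    intro x
    by_cases hx : x ∈ stdSimplex ℝ ι
    · exact (Set.mem_iUnion.1 (hcover hx)).imp fun _ h _ ↦ h
    · exact ⟨Classical.arbitrary ι, fun h ↦ absurd h hx⟩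
  choose c hc using hcolor
  obtain ⟨p, hp, hcp⟩ := exists_mem_stdSimplex_forall_color_near_or_lt c hε
  obtain ⟨i, hi⟩ := hball p hp
  obtain ⟨q, hq, rfl, hqp⟩ | hpi := hcp i
  · exact hi hqp (.inl (hc q hq))
  · refine hi (a := Function.update p i 0) ?_ (.inr (Function.update_self i 0 p))
    rw [Metric.mem_ball, dist_pi_lt_iff hε]
    intro j
    obtain rfl | hj := eq_or_ne j i
    · simpa [abs_of_nonneg (hp.1 j)] using hpi
    · simpa [hj] using hε

theorem exists_fixedPoint_of_mapsTo_stdSimplex [Nonempty ι] {g : (ι → ℝ) → ι → ℝ}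
    (hcont : ContinuousOn g (stdSimplex ℝ ι))
    (hmaps : Set.MapsTo g (stdSimplex ℝ ι) (stdSimplex ℝ ι)) :
    ∃ x ∈ stdSimplex ℝ ι, g x = x := by
  obtain ⟨x, hx, hle⟩ := exists_mem_stdSimplex_forall_mem_of_isClosed
    (A := fun i ↦ {x | x ∈ stdSimplex ℝ ι ∧ x i ≤ g x i})
    (fun i ↦ (isClosed_stdSimplex ℝ ι).isClosed_le (continuous_apply i).continuousOn
      (continuousOn_pi.1 hcont i))
    (fun x hx ↦ by
      obtain ⟨i, -, hi⟩ := exists_le_of_sum_le univ_nonempty (hx.2.trans (hmaps hx).2.symm).le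
      exact Set.mem_iUnion.2 ⟨i, hx, hi⟩)
    (fun x hx i hi ↦ ⟨hx, hi ▸ (hmaps hx).1 i⟩)
  have hsum : ∑ i, x i = ∑ i, g x i := hx.2.trans (hmaps hx).2.symm
  exact ⟨x, hx, funext fun i ↦
    ((sum_eq_sum_iff_of_le fun i _ ↦ (hle i).2).1 hsum i (mem_univ i)).symm⟩

theorem exists_fixedPoint_of_mapsTo_levelSet [Nonempty ι] {g : (ι → ℝ) → ι → ℝ} {u : ℝ}
    (hu : 0 < u) (hcont : ContinuousOn g {x | (∀ i, 0 ≤ x i) ∧ ∑ i, x i = u})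
    (hmaps : Set.MapsTo g {x | (∀ i, 0 ≤ x i) ∧ ∑ i, x i = u}
      {x | (∀ i, 0 ≤ x i) ∧ ∑ i, x i = u}) :
    ∃ x, ((∀ i, 0 ≤ x i) ∧ ∑ i, x i = u) ∧ g x = x := by
  have hscale : Set.MapsTo (u • ·) (stdSimplex ℝ ι) {x : ι → ℝ | (∀ i, 0 ≤ x i) ∧ ∑ i, x i = u} :=
    fun x hx ↦ ⟨fun i ↦ mul_nonneg hu.le (hx.1 i), by simp [← mul_sum, hx.2]⟩
  have hunscale : Set.MapsTo (u⁻¹ • ·) {x : ι → ℝ | (∀ i, 0 ≤ x i) ∧ ∑ i, x i = u}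
      (stdSimplex ℝ ι) := fun x hx ↦
    ⟨fun i ↦ mul_nonneg (inv_nonneg.2 hu.le) (hx.1 i), by simp [← mul_sum, hx.2, hu.ne']⟩
  obtain ⟨x, hx, hfix⟩ := exists_fixedPoint_of_mapsTo_stdSimplex
    (g := fun x ↦ u⁻¹ • g (u • x))
    ((hcont.comp (continuous_const_smul u).continuousOn hscale).const_smul u⁻¹)
    (hunscale.comp (hmaps.comp hscale))
  exact ⟨u • x, hscale hx, (inv_smul_eq_iff₀ hu.ne').1 hfix⟩

end Simplex

section Gmap

variable {n : ℕ} {α : ℝ} {v x : Fin n → ℝ} {R : Matrix (Fin n) (Fin n × Fin n) ℝ}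

theorem continuous_Gmap : Continuous (Gmap n α v R) := by
  unfold Gmap
  fun_prop

theorem Gmap_nonneg (hα : α ∈ Set.Icc (0 : ℝ) 1) (hv : ∀ i, 0 ≤ v i) (hR : ∀ i j, 0 ≤ R i j)
    (hx : ∀ i, 0 ≤ x i) (i : Fin n) : 0 ≤ Gmap n α v R x i :=
  add_nonneg
    (mul_nonneg hα.1 (sum_nonneg fun p _ ↦ mul_nonneg (hR i p) (mul_nonneg (hx p.1) (hx p.2))))
    (mul_nonneg (sub_nonneg.2 hα.2) (hv i))

theorem sum_Gmap (hv1 : ∑ i, v i = 1) (hRs : ∀ j, ∑ i, R i j = 1) :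
    ∑ i, Gmap n α v R x i = α * (∑ i, x i) ^ 2 + (1 - α) := by
  have hR1 : ∑ i, R.mulVec (fun p ↦ x p.1 * x p.2) i = (∑ i, x i) ^ 2 := by
    simp only [Matrix.mulVec, dotProduct]
    rw [sum_comm]
    simp only [← sum_mul, hRs, one_mul]
    rw [Fintype.sum_prod_type, sq, sum_mul_sum]
  simp only [Gmap, Pi.add_apply, Pi.smul_apply, smul_eq_mul]
  rw [sum_add_distrib, ← mul_sum, ← mul_sum, hR1, hv1, mul_one]

theorem exists_fixedPoint_Gmap_of_sum_eq (hα : α ∈ Set.Icc (0 : ℝ) 1)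
    (hv : ∀ i, 0 ≤ v i) (hv1 : ∑ i, v i = 1) (hR : ∀ i j, 0 ≤ R i j)
    (hRs : ∀ j, ∑ i, R i j = 1) {u : ℝ} (hu : 0 < u) (huα : α * u ^ 2 + (1 - α) = u) :
    ∃ x : Fin n → ℝ, (∀ i, 0 ≤ x i) ∧ Gmap n α v R x = x ∧ ∑ i, x i = u := by
  have : Nonempty (Fin n) := by
    by_contra! h
    simp at hv1
  obtain ⟨x, ⟨hx, hxu⟩, hfix⟩ := exists_fixedPoint_of_mapsTo_levelSet (g := Gmap n α v R) hu
    continuous_Gmap.continuousOn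
    fun x hx ↦ ⟨Gmap_nonneg hα hv hR hx.1, by rw [sum_Gmap hv1 hRs, hx.2, huα]⟩
  exact ⟨x, hx, hfix, hxu⟩

end Gmap

theorem stmt_7 (n : ℕ) (hn : 1 ≤ n) (α : ℝ) (hα : α ∈ Set.Ioo (0:ℝ) 1)
    (v : Fin n → ℝ) (hv : ∀ i, 0 ≤ v i) (hv1 : ∑ i, v i = 1)
    (R : Matrix (Fin n) (Fin n × Fin n) ℝ) (hR : ∀ i j, 0 ≤ R i j)
    (hRs : ∀ j, ∑ i, R i j = 1) :
    (∃ x : Fin n → ℝ, (∀ i, 0 ≤ x i) ∧ Gmap n α v R x = x ∧ ∑ i, x i = 1) ∧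
    (∃ x : Fin n → ℝ, (∀ i, 0 ≤ x i) ∧ Gmap n α v R x = x ∧
      ∑ i, x i = (1 - α) / α) := by
  have hα' : α ∈ Set.Icc (0 : ℝ) 1 := Set.Ioo_subset_Icc_self hα
  have hroot : α * ((1 - α) / α) ^ 2 + (1 - α) = (1 - α) / α := by
    field_simp [hα.1.ne']
    ring
  exact ⟨exists_fixedPoint_Gmap_of_sum_eq hα' hv hv1 hR hRs one_pos (by ring),
    exists_fixedPoint_Gmap_of_sum_eq hα' hv hv1 hR hRs
      (div_pos (sub_pos.2 hα.2) hα.1) hroot⟩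
end
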